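/- arXiv:2005.06384 — 3 statements merged into one kernel-verified Lean document; each statement's English description precedes it below -/
import Mathlib

section
/- Let a be a real number with 2 < a < 3. Then for every real x > 0, Γ(a,x) < g_a(x) < G_a(x). -/
/-!
Both inequalities are proved by monotonicity arguments starting from the common value `Γ(a)` of the
three functions at `x = 0`.

First inequality. Let `D = g_a - Γ(a,·)`. Then `D(0) = 0`, `D(x) → 0` as `x → ∞`, and
`D'(x) = e^(-x) R(x)`, where, up to a constant, `R` is half the error of the one-step trapezoidal
rule for `t^(a-1)` on `[x, x+2]`. Its derivative is the corresponding error for the strictly concave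
function `(a-1) t^(a-2)`, hence negative (`trapezoid_lt`), so `R` is strictly decreasing. If
`R(x) ≥ 0`, then `D` is strictly increasing on `[0, x]` and `D(x) > D(0) = 0`; if `R(x) < 0`, then
`D` is strictly decreasing on `[x, ∞)` and `D(x) > lim D = 0`.

Second inequality. Log-convexity of `Γ` with the values at `5/2` and `3` gives `Γ(a+1) > 2^(a-1)`,
that is, `b_a > 2` (`two_lt_bCoef`). After dividing by `e^(-x)`, the derivative of `G_a - g_a` is a
difference of secant slopes of the strictly convex function `t^(a-1)` on `[x, x+b_a]` and
`[x, x+2]`, hence positive.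
-/

open Real Filter Set

/-- Upper incomplete gamma function `Γ(a,x) = ∫_x^∞ t^(a-1) e^(-t) dt`. -/
noncomputable def incGamma (a x : ℝ) : ℝ := ∫ t in Set.Ioi x, t ^ (a - 1) * Real.exp (-t)

/-- `b_a = Γ(a+1)^(1/(a-1))` for `a ≠ 1`, and `b_1 = e^(1-γ)`. -/
noncomputable def bCoef (a : ℝ) : ℝ :=
  if a = 1 then Real.exp (1 - Real.eulerMascheroniConstant)
  else Real.Gamma (a + 1) ^ (1 / (a - 1))

/-- `G_a(x) = ((x+b_a)^a - x^a) e^(-x) / (a b_a)`. -/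
noncomputable def Gbound (a x : ℝ) : ℝ :=
  ((x + bCoef a) ^ a - x ^ a) * Real.exp (-x) / (a * bCoef a)

/-- `g_a(x) = (((x+2)^a - x^a - 2^a)/(2a) + Γ(a)) e^(-x)`. -/
noncomputable def gbound (a x : ℝ) : ℝ :=
  (((x + 2) ^ a - x ^ a - (2 : ℝ) ^ a) / (2 * a) + Real.Gamma a) * Real.exp (-x)

/-- `g_a^lo(x) = x^a e^(-x) (x-a-1) / ((x-a)^2 + a)`. -/
noncomputable def gLo (a x : ℝ) : ℝ :=
  x ^ a * Real.exp (-x) * (x - a - 1) / ((x - a) ^ 2 + a)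

/-- `g_a^hi(x) = x^a e^(-x) / (x-a)`. -/
noncomputable def gHi (a x : ℝ) : ℝ := x ^ a * Real.exp (-x) / (x - a)

/-- Strict trapezoidal inequality for the strictly concave function `t ↦ (p+1) t^p`. -/
lemma trapezoid_lt {p x y : ℝ} (hp0 : 0 < p) (hp1 : p < 1) (hx : 0 < x) (hxy : x < y) :
    (p + 1) / 2 * ((y - x) * (y ^ p + x ^ p)) < y ^ (p + 1) - x ^ (p + 1) := by
  let F : ℝ → ℝ := fun y => y ^ (p + 1) - x ^ (p + 1) - (p + 1) / 2 * ((y - x) * (y ^ p + x ^ p))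
  have hF : ∀ z, 0 < z → HasDerivAt F
      ((p + 1) / 2 * (z ^ p - x ^ p - p * (z - x) * z ^ (p - 1))) z := by
    intro z hz
    have h1 : HasDerivAt (fun z : ℝ => z ^ (p + 1)) ((p + 1) * z ^ (p + 1 - 1)) z :=
      Real.hasDerivAt_rpow_const (Or.inl hz.ne')
    have h2 : HasDerivAt (fun z : ℝ => z ^ p) (p * z ^ (p - 1)) z :=
      Real.hasDerivAt_rpow_const (Or.inl hz.ne')
    have h3 := (h1.sub_const (x ^ (p + 1))).sub
      ((((hasDerivAt_id z).sub_const x).mul (h2.add_const (x ^ p))).const_mul ((p + 1) / 2))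
    refine h3.congr_deriv ?_
    simp only [id, add_sub_cancel_right]
    ring
  have hmono : StrictMonoOn F (Set.Ici x) := by
    refine strictMonoOn_of_deriv_pos (convex_Ici x) ?_ ?_
    · intro z hz
      exact (hF z (hx.trans_le hz)).continuousAt.continuousWithinAt
    · intro z hz
      rw [interior_Ici] at hz
      have hz' : x < z := hz
      have hz0 : 0 < z := hx.trans hz'
      rw [(hF z hz0).deriv]
      -- Bernoulli's inequality for `1 + s = x / z`, scaled by `z ^ p`: the tangent at `z` lies
      -- above the graph of `t ^ p`.
      have hb : (1 + (x / z - 1)) ^ p < 1 + p * (x / z - 1) := by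
        refine _root_.rpow_one_add_lt_one_add_mul_self ?_ ?_ hp0 hp1
        · have := div_pos hx hz0
          linarith
        · have := (div_lt_one hz0).2 hz'
          linarith
      rw [add_sub_cancel, Real.div_rpow hx.le hz0.le] at hb
      have hzp : 0 < z ^ p := Real.rpow_pos_of_pos hz0 p
      rw [div_lt_iff₀ hzp] at hb
      have hzp1 : z ^ (p - 1) = z ^ p / z := Real.rpow_sub_one hz0.ne' p
      have he : z ^ p - x ^ p - p * (z - x) * z ^ (p - 1)
          = (1 + p * (x / z - 1)) * z ^ p - x ^ p := by
        rw [hzp1]; field_simp; ring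
      rw [he]
      have : 0 < (1 + p * (x / z - 1)) * z ^ p - x ^ p := by linarith
      positivity
  have h := hmono (Set.mem_Ici.2 le_rfl) (Set.mem_Ici.2 hxy.le) hxy
  have h0 : F x = 0 := by simp [F]
  rw [h0] at h
  simp only [F] at h
  linarith

/-- The slope of `log Γ` on `[5/2, 3]` exceeds `log 2`, because `Γ(5/2) = 3√π/4 < √2`; by convexity
so does the slope on `[3, a+1]`. -/
lemma two_rpow_lt_Gamma {a : ℝ} (ha : 2 < a) : (2 : ℝ) ^ (a - 1) < Real.Gamma (a + 1) := by
  have hG3 : Real.Gamma 3 = 2 := by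
    have h := Real.Gamma_nat_eq_factorial 2
    rw [show ((2 : ℕ) : ℝ) + 1 = 3 by norm_num] at h
    rw [h]
    norm_num [Nat.factorial]
  have hG52 : Real.Gamma (5 / 2) = 3 / 4 * √π := by
    have h1 := Real.Gamma_add_one (s := 1 / 2) (by norm_num)
    have h2 := Real.Gamma_add_one (s := 3 / 2) (by norm_num)
    norm_num at h1 h2
    rw [h2, h1, Real.Gamma_one_half_eq]
    ring
  have hlog : 2 * Real.log (Real.Gamma (5 / 2)) < Real.log 2 := by
    have hpos : 0 < Real.Gamma (5 / 2) := Real.Gamma_pos_of_pos (by norm_num)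
    have : 2 * Real.log (Real.Gamma (5 / 2)) = Real.log (Real.Gamma (5 / 2) ^ 2) := by
      rw [Real.log_pow]; norm_num
    rw [this]
    refine Real.log_lt_log (by positivity) ?_
    rw [hG52, mul_pow, Real.sq_sqrt Real.pi_pos.le]
    have := Real.pi_lt_d2
    linarith
  have hs := Real.convexOn_log_Gamma.slope_mono_adjacent (x := 5 / 2) (y := 3) (z := a + 1)
    (by norm_num [Set.mem_Ioi]) (by simp only [Set.mem_Ioi]; linarith) (by norm_num) (by linarith)
  simp only [Function.comp, hG3] at hs
  have ha2 : 0 < a + 1 - 3 := by linarith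
  rw [le_div_iff₀ ha2] at hs
  have hpos : 0 < Real.Gamma (a + 1) := Real.Gamma_pos_of_pos (by linarith)
  rw [← Real.log_lt_log_iff (by positivity) hpos, Real.log_rpow (by norm_num)]
  have : Real.log 2 * (a + 1 - 3)
      < (Real.log 2 - Real.log (Real.Gamma (5 / 2))) / (3 - 5 / 2) * (a + 1 - 3) := by
    refine mul_lt_mul_of_pos_right ?_ ha2
    rw [lt_div_iff₀ (by norm_num)]
    linarith
  linarith

lemma bCoef_rpow {a : ℝ} (ha : 2 < a) : bCoef a ^ (a - 1) = Real.Gamma (a + 1) := by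
  have hpos : 0 < Real.Gamma (a + 1) := Real.Gamma_pos_of_pos (by linarith)
  rw [bCoef, if_neg (by linarith), ← Real.rpow_mul hpos.le,
    one_div_mul_cancel (by linarith), Real.rpow_one]

lemma two_lt_bCoef {a : ℝ} (ha : 2 < a) : 2 < bCoef a := by
  have hpos : 0 < Real.Gamma (a + 1) := Real.Gamma_pos_of_pos (by linarith)
  have hb : 0 ≤ bCoef a := by
    rw [bCoef, if_neg (by linarith)]; positivity
  have h := two_rpow_lt_Gamma ha
  rw [← bCoef_rpow ha] at h
  exact (Real.rpow_lt_rpow_iff (by norm_num) hb (by linarith)).1 h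

lemma hasDerivAt_shift_rpow {a : ℝ} (ha : 1 ≤ a) (c x : ℝ) :
    HasDerivAt (fun x : ℝ => (x + c) ^ a) (a * (x + c) ^ (a - 1)) x := by
  have := ((hasDerivAt_id x).add_const c).rpow_const (p := a) (Or.inr ha)
  simpa using this

lemma gbound_lt_Gbound {a x : ℝ} (ha : 2 < a) (hx : 0 < x) : gbound a x < Gbound a x := by
  have hb2 := two_lt_bCoef ha
  have hbr := bCoef_rpow ha
  unfold gbound Gbound
  set b := bCoef a
  have hb0 : 0 < b := by linarith
  have ha0 : 0 < a := by linarith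
  let K : ℝ → ℝ := fun x => ((x + b) ^ a - (x + 0) ^ a) / (a * b)
    - (((x + 2) ^ a - (x + 0) ^ a - (2 : ℝ) ^ a) / (2 * a) + Real.Gamma a)
  have hK : ∀ z, HasDerivAt K
      (((z + b) ^ (a - 1) - z ^ (a - 1)) / b - ((z + 2) ^ (a - 1) - z ^ (a - 1)) / 2) z := by
    intro z
    have h (c : ℝ) := hasDerivAt_shift_rpow (a := a) (by linarith) c z
    have h3 := (((h b).sub (h 0)).div_const (a * b)).sub
      (((((h 2).sub (h 0)).sub_const ((2 : ℝ) ^ a)).div_const (2 * a)).add_const (Real.Gamma a))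
    refine h3.congr_deriv ?_
    simp only [add_zero]
    field_simp
  have hmono : StrictMonoOn K (Set.Ici 0) := by
    refine strictMonoOn_of_deriv_pos (convex_Ici 0)
      (fun z _ => (hK z).continuousAt.continuousWithinAt) ?_
    intro z hz
    rw [interior_Ici] at hz
    have hz' : 0 < z := hz
    rw [(hK z).deriv]
    have h := (strictConvexOn_rpow (p := a - 1) (by linarith)).secant_strict_mono
      (a := z) (x := z + 2) (y := z + b) (Set.mem_Ici.2 hz'.le)
      (by simp only [Set.mem_Ici]; linarith) (by simp only [Set.mem_Ici]; linarith)
      (by linarith) (by linarith) (by linarith)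
    rw [add_sub_cancel_left, add_sub_cancel_left] at h
    linarith
  have h := hmono (Set.mem_Ici.2 le_rfl) (Set.mem_Ici.2 hx.le) hx
  have h0 : K 0 = 0 := by
    have e1 : b ^ a = b * (a * Real.Gamma a) := by
      rw [← Real.Gamma_add_one ha0.ne', ← hbr, Real.rpow_sub_one hb0.ne']
      field_simp
    simp only [K, zero_add, e1, Real.zero_rpow ha0.ne']
    field_simp
    ring
  rw [h0] at h
  simp only [K, add_zero] at h
  rw [mul_div_right_comm]
  exact mul_lt_mul_of_pos_right (by linarith) (Real.exp_pos _)

lemma integrableOn_rpow_mul_exp {a : ℝ} (ha : 0 < a) :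
    MeasureTheory.IntegrableOn (fun t : ℝ => t ^ (a - 1) * Real.exp (-t)) (Set.Ioi 0) := by
  simpa only [mul_comm] using Real.GammaIntegral_convergent ha

lemma integral_Ioi_eq_Gamma {a : ℝ} (ha : 0 < a) :
    ∫ t in Set.Ioi (0 : ℝ), t ^ (a - 1) * Real.exp (-t) = Real.Gamma a := by
  rw [Real.Gamma_eq_integral ha]
  simp only [mul_comm]

lemma incGamma_eq {a x : ℝ} (ha : 0 < a) (hx : 0 ≤ x) :
    incGamma a x = Real.Gamma a - ∫ t in (0 : ℝ)..x, t ^ (a - 1) * Real.exp (-t) := by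
  have hI := integrableOn_rpow_mul_exp ha
  have h := intervalIntegral.integral_Ioi_sub_Ioi hI hx
  rw [integral_Ioi_eq_Gamma ha] at h
  rw [← h, incGamma]
  ring

lemma tendsto_shift_rpow_mul_exp (a : ℝ) {c : ℝ} :
    Tendsto (fun x : ℝ => (x + c) ^ a * Real.exp (-x)) atTop (nhds 0) := by
  have h := (tendsto_rpow_mul_exp_neg_mul_atTop_nhds_zero a 1 one_pos).comp
    (tendsto_atTop_add_const_right atTop c tendsto_id)
  have h2 := h.mul_const (Real.exp c)
  rw [zero_mul] at h2
  refine h2.congr (fun x => ?_)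
  simp only [Function.comp, id, mul_assoc, ← Real.exp_add]
  congr 2
  ring

lemma incGamma_lt_gbound {a x : ℝ} (ha1 : 2 < a) (ha2 : a < 3) (hx : 0 < x) :
    incGamma a x < gbound a x := by
  have ha0 : 0 < a := by linarith
  let P : ℝ → ℝ := fun x => ((x + 2) ^ a - (x + 0) ^ a - (2 : ℝ) ^ a) / (2 * a) + Real.Gamma a
  let f : ℝ → ℝ := fun t => t ^ (a - 1) * Real.exp (-t)
  let D : ℝ → ℝ := fun x => P x * Real.exp (-x) - (Real.Gamma a - ∫ t in (0 : ℝ)..x, f t)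
  let R : ℝ → ℝ := fun x => ((x + 2) ^ (a - 1) + (x + 0) ^ (a - 1)) / 2 - P x
  have hf : Continuous f :=
    (Real.continuous_rpow_const (by linarith)).mul (Real.continuous_exp.comp continuous_neg)
  have hP : ∀ z, HasDerivAt P (((z + 2) ^ (a - 1) - z ^ (a - 1)) / 2) z := by
    intro z
    have h (c : ℝ) := hasDerivAt_shift_rpow (a := a) (by linarith) c z
    refine (((((h 2).sub (h 0)).sub_const ((2 : ℝ) ^ a)).div_const (2 * a)).add_const
      (Real.Gamma a)).congr_deriv ?_
    simp only [add_zero]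
    field_simp
  have hD : ∀ z, HasDerivAt D (Real.exp (-z) * R z) z := by
    intro z
    have h1 : HasDerivAt (fun z : ℝ => Real.exp (-z)) (Real.exp (-z) * (-1)) z :=
      (hasDerivAt_neg z).exp
    have h2 : HasDerivAt (fun z : ℝ => ∫ t in (0 : ℝ)..z, f t) (f z) z :=
      hf.integral_hasStrictDerivAt 0 z |>.hasDerivAt
    refine (((hP z).mul h1).sub (h2.const_sub (Real.Gamma a))).congr_deriv ?_
    simp only [R, f, add_zero]
    ring
  have hR : StrictAntiOn R (Set.Ici 0) := by
    have hR' : ∀ z, HasDerivAt R ((a - 1) / 2 * ((z + 2) ^ (a - 2) + z ^ (a - 2))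
        - ((z + 2) ^ (a - 1) - z ^ (a - 1)) / 2) z := by
      intro z
      have h (c : ℝ) := hasDerivAt_shift_rpow (a := a - 1) (by linarith) c z
      refine ((((h 2).add (h 0)).div_const 2).sub (hP z)).congr_deriv ?_
      rw [show a - 1 - 1 = a - 2 by ring, add_zero]
      ring
    refine strictAntiOn_of_deriv_neg (convex_Ici 0)
      (fun z _ => (hR' z).continuousAt.continuousWithinAt) ?_
    intro z hz
    rw [interior_Ici] at hz
    rw [(hR' z).deriv]
    have h := trapezoid_lt (p := a - 2) (x := z) (y := z + 2) (by linarith) (by linarith) hz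
      (by linarith)
    rw [show a - 2 + 1 = a - 1 by ring, add_sub_cancel_left] at h
    linarith
  have hDcont : Continuous D := continuous_iff_continuousAt.2 fun z => (hD z).continuousAt
  have hD0 : D 0 = 0 := by simp [D, P, Real.zero_rpow ha0.ne']
  have hDlim : Tendsto D atTop (nhds 0) := by
    have h1 : Tendsto (fun z => ∫ t in (0 : ℝ)..z, f t) atTop (nhds (Real.Gamma a)) := by
      rw [← integral_Ioi_eq_Gamma ha0]
      exact MeasureTheory.intervalIntegral_tendsto_integral_Ioi 0
        (integrableOn_rpow_mul_exp ha0) tendsto_id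
    have h2 : Tendsto (fun z => P z * Real.exp (-z)) atTop (nhds 0) := by
      have e := (((tendsto_shift_rpow_mul_exp a (c := 2)).sub
        (tendsto_shift_rpow_mul_exp a (c := 0))).mul_const (1 / (2 * a))).add
        ((Real.tendsto_exp_neg_atTop_nhds_zero).mul_const
          (Real.Gamma a - (2 : ℝ) ^ a / (2 * a)))
      simp only [sub_zero, zero_mul, add_zero] at e
      refine e.congr (fun z => ?_)
      simp only [P, add_zero]
      ring
    have h3 := h2.sub (h1.const_sub (Real.Gamma a))
    simpa only [sub_self] using h3
  have key : 0 < D x := by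
    rcases le_or_gt 0 (R x) with h | h
    · have hmono : StrictMonoOn D (Set.Icc 0 x) := by
        refine strictMonoOn_of_deriv_pos (convex_Icc 0 x) hDcont.continuousOn ?_
        intro z hz
        rw [interior_Icc] at hz
        rw [(hD z).deriv]
        exact mul_pos (Real.exp_pos _)
          (h.trans_lt (hR (Set.mem_Ici.2 hz.1.le) (Set.mem_Ici.2 hx.le) hz.2))
      have := hmono (Set.left_mem_Icc.2 hx.le) (Set.right_mem_Icc.2 hx.le) hx
      rwa [hD0] at this
    · have hanti : StrictAntiOn D (Set.Ici x) := by
        refine strictAntiOn_of_deriv_neg (convex_Ici x) hDcont.continuousOn ?_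
        intro z hz
        rw [interior_Ici] at hz
        have hz' : x < z := hz
        rw [(hD z).deriv]
        exact mul_neg_of_pos_of_neg (Real.exp_pos _)
          ((hR (Set.mem_Ici.2 hx.le) (Set.mem_Ici.2 (hx.trans hz').le) hz').trans h)
      -- Comparison at the intermediate point `x + 1` keeps the inequality strict in the limit.
      have h1 : D (x + 1) < D x :=
        hanti (Set.mem_Ici.2 le_rfl) (Set.mem_Ici.2 (by linarith)) (by linarith)
      have h2 : 0 ≤ D (x + 1) := by
        refine le_of_tendsto hDlim ?_
        filter_upwards [eventually_ge_atTop (x + 1)] with z hz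
        exact hanti.antitoneOn (Set.mem_Ici.2 (by linarith)) (Set.mem_Ici.2 (by linarith)) hz
      linarith
  rw [incGamma_eq ha0 hx.le, gbound]
  simp only [D, P, f, add_zero] at key
  linarith

theorem stmt4 (a : ℝ) (ha1 : 2 < a) (ha2 : a < 3) :
    ∀ x : ℝ, 0 < x → incGamma a x < gbound a x ∧ gbound a x < Gbound a x :=
  fun _ hx => ⟨incGamma_lt_gbound ha1 ha2 hx, gbound_lt_Gbound ha1 hx⟩
end

section
/- Let a be a real number with a < -1. Then g_a^lo(x)/Γ(a,x) → 1 both as x → 0+ and as x → ∞. Moreover, for every real a < 0, g_a^hi(x)/Γ(a,x) → 1 both as x → 0+ and as x → ∞. -/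
/-!
For `a < 0` the function `F_c(t) = t^a e^(-t) / (t + c)` satisfies
`-F_c'(t) = t^(a-1) e^(-t) ((t - a)/(t + c) + t/(t + c)^2)`. The last factor is at least `1` for
`c = -a` and at most `1` for `c = 1 - a`, so integrating over `(x, ∞)` gives
`x^a e^(-x) / (x - a + 1) ≤ Γ(a,x) ≤ x^a e^(-x) / (x - a)`, which settles the claim on `gHi` at `∞`.

At `0+` the upper bound is still sharp, and a matching lower bound is obtained by keeping only
the part of the integral over `(x, √x]`, where `e^(-t) ≥ e^(-√x)`:
`Γ(a,x) ≥ e^(-√x) (x^a - x^(a/2)) / (-a)`, and `x^(a/2) = o(x^a)`.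

The claim on `gLo` follows, since
`gLo a x / gHi a x = (x - a - 1)(x - a) / ((x - a)^2 + a)` tends to `1` at both ends when `a < -1`.
-/

open Real Filter Set

lemma incGamma_integrableOn {a x : ℝ} (ha : a < 0) (hx : 0 < x) :
    MeasureTheory.IntegrableOn (fun t : ℝ => t ^ (a - 1) * Real.exp (-t)) (Ioi x) := by
  have h := integrableOn_Ioi_rpow_of_lt (show a - 1 < -1 by linarith) hx
  refine MeasureTheory.Integrable.mono' h ?_ ?_
  · refine ContinuousOn.aestronglyMeasurable ?_ measurableSet_Ioi
    intro t ht
    have ht0 : t ≠ 0 := (hx.trans ht).ne'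
    exact ((Real.continuousAt_rpow_const t _ (Or.inl ht0)).mul
      (by fun_prop)).continuousWithinAt
  · refine (MeasureTheory.ae_restrict_iff' measurableSet_Ioi).2 (Eventually.of_forall ?_)
    intro t ht
    have ht0 : 0 < t := hx.trans ht
    have h1 : 0 < t ^ (a - 1) := Real.rpow_pos_of_pos ht0 _
    have h2 : Real.exp (-t) ≤ 1 := Real.exp_le_one_iff.2 (by linarith)
    rw [Real.norm_of_nonneg (by positivity)]
    nlinarith

/-- The derivative is written as the negated integrand of `Γ(a,x)` times a factor, so that
bounding that factor by `1` compares `t^a e^(-t) / (t + c)` with `Γ(a,t)`. -/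
lemma hasDerivAt_ratio {a c t : ℝ} (ht : 0 < t) (hc : 0 < c) :
    HasDerivAt (fun t : ℝ => t ^ a * Real.exp (-t) / (t + c))
      (-(t ^ (a - 1) * Real.exp (-t) * ((t - a) / (t + c) + t / (t + c) ^ 2))) t := by
  have h1 := Real.hasDerivAt_rpow_const (x := t) (p := a) (Or.inl ht.ne')
  have h2 : HasDerivAt (fun t : ℝ => Real.exp (-t)) (Real.exp (-t) * (-1)) t :=
    (hasDerivAt_neg t).exp
  have h3 := (h1.mul h2).div ((hasDerivAt_id t).add_const c) (by simp; positivity)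
  refine h3.congr_deriv ?_
  have e : t ^ a = t ^ (a - 1) * t := by
    rw [Real.rpow_sub_one ht.ne']; field_simp
  simp only [id, Pi.mul_apply]
  rw [e]
  field_simp
  ring

lemma tendsto_ratio (a : ℝ) {c : ℝ} :
    Tendsto (fun t : ℝ => t ^ a * Real.exp (-t) / (t + c)) atTop (nhds 0) := by
  have h1 := tendsto_rpow_mul_exp_neg_mul_atTop_nhds_zero a 1 one_pos
  have h2 : Tendsto (fun t : ℝ => (t + c)⁻¹) atTop (nhds 0) :=
    tendsto_inv_atTop_zero.comp (tendsto_atTop_add_const_right _ c tendsto_id)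
  simpa [div_eq_mul_inv] using h1.mul h2

lemma integral_ratio {a c x : ℝ} (ha : a < 0) (hx : 0 < x) (hc : 0 < c) :
    MeasureTheory.IntegrableOn (fun t : ℝ =>
      t ^ (a - 1) * Real.exp (-t) * ((t - a) / (t + c) + t / (t + c) ^ 2)) (Ioi x) ∧
    ∫ t in Ioi x, t ^ (a - 1) * Real.exp (-t) * ((t - a) / (t + c) + t / (t + c) ^ 2)
      = x ^ a * Real.exp (-x) / (x + c) := by
  have hd : ∀ t ∈ Ici x, HasDerivAt (fun t : ℝ => t ^ a * Real.exp (-t) / (t + c))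
      (-(t ^ (a - 1) * Real.exp (-t) * ((t - a) / (t + c) + t / (t + c) ^ 2))) t :=
    fun t ht => hasDerivAt_ratio (hx.trans_le ht) hc
  have hn : ∀ t ∈ Ioi x,
      -(t ^ (a - 1) * Real.exp (-t) * ((t - a) / (t + c) + t / (t + c) ^ 2)) ≤ 0 := by
    intro t ht
    have ht0 : 0 < t := hx.trans ht
    have : 0 < t - a := by linarith
    have : 0 < t ^ (a - 1) := Real.rpow_pos_of_pos ht0 _
    rw [neg_nonpos]
    positivity
  have h1 := MeasureTheory.integrableOn_Ioi_deriv_of_nonpos' hd hn (tendsto_ratio a)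
  have h2 := MeasureTheory.integral_Ioi_of_hasDerivAt_of_nonpos' hd hn (tendsto_ratio a)
  refine ⟨by simpa using h1.neg, ?_⟩
  rw [MeasureTheory.integral_neg] at h2
  linarith

lemma incGamma_le_gHi {a x : ℝ} (ha : a < 0) (hx : 0 < x) : incGamma a x ≤ gHi a x := by
  obtain ⟨h1, h2⟩ := integral_ratio ha hx (neg_pos.2 ha)
  rw [gHi, sub_eq_add_neg, ← h2, incGamma]
  refine MeasureTheory.setIntegral_mono_on (incGamma_integrableOn ha hx) h1 measurableSet_Ioi ?_
  intro t ht
  have ht0 : 0 < t := hx.trans ht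
  have hp : 0 < t ^ (a - 1) := Real.rpow_pos_of_pos ht0 _
  refine le_mul_of_one_le_right (by positivity) ?_
  have h3 : 0 < t + -a := by linarith
  rw [sub_eq_add_neg, div_self h3.ne']
  have : 0 ≤ t / (t + -a) ^ 2 := by positivity
  linarith

lemma le_incGamma {a x : ℝ} (ha : a < 0) (hx : 0 < x) :
    x ^ a * Real.exp (-x) / (x + (1 - a)) ≤ incGamma a x := by
  obtain ⟨h1, h2⟩ := integral_ratio ha hx (show 0 < 1 - a by linarith)
  rw [← h2, incGamma]
  refine MeasureTheory.setIntegral_mono_on h1 (incGamma_integrableOn ha hx) measurableSet_Ioi ?_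
  intro t ht
  have ht0 : 0 < t := hx.trans ht
  have hp : 0 < t ^ (a - 1) := Real.rpow_pos_of_pos ht0 _
  refine mul_le_of_le_one_right (by positivity) ?_
  have h3 : 0 < t + (1 - a) := by linarith
  rw [div_add_div _ _ h3.ne' (by positivity), div_le_one (by positivity)]
  nlinarith [mul_pos h3 h3, mul_pos h3 (show 0 < 1 - a by linarith)]

lemma incGamma_pos {a x : ℝ} (ha : a < 0) (hx : 0 < x) : 0 < incGamma a x := by
  refine lt_of_lt_of_le ?_ (le_incGamma ha hx)
  have : 0 < x ^ a := Real.rpow_pos_of_pos hx _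
  have : 0 < x + (1 - a) := by linarith
  positivity

/-- Lower bound that is sharp at `0+`, from the part of the integral over `(x, √x]`. -/
lemma le_incGamma_near_zero {a x : ℝ} (ha : a < 0) (hx : 0 < x) (hx1 : x < 1) :
    Real.exp (-√x) * ((x ^ a - x ^ (a / 2)) / (-a)) ≤ incGamma a x := by
  have hxs : x ≤ √x := Real.le_sqrt_of_sq_le (by nlinarith)
  have hI := incGamma_integrableOn ha hx
  have hI2 : MeasureTheory.IntegrableOn (fun t : ℝ => t ^ (a - 1)) (Ioc x √x) :=
    (integrableOn_Ioi_rpow_of_lt (show a - 1 < -1 by linarith) hx).mono_set Ioc_subset_Ioi_self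
  have e : ∫ t in Ioc x √x, Real.exp (-√x) * t ^ (a - 1)
      = Real.exp (-√x) * ((x ^ a - x ^ (a / 2)) / (-a)) := by
    rw [MeasureTheory.integral_const_mul, ← intervalIntegral.integral_of_le hxs,
      integral_rpow (Or.inr ⟨by linarith, by
        rw [uIcc_of_le hxs]; exact fun h => absurd h.1 (not_le.2 hx)⟩)]
    have : √x ^ a = x ^ (a / 2) := by
      rw [Real.sqrt_eq_rpow, ← Real.rpow_mul hx.le]; ring_nf
    rw [sub_add_cancel, this, div_neg, ← neg_div, neg_sub]
  rw [← e, incGamma]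
  calc _ ≤ ∫ t in Ioc x √x, t ^ (a - 1) * Real.exp (-t) := by
        refine MeasureTheory.setIntegral_mono_on (hI2.const_mul _)
          (hI.mono_set Ioc_subset_Ioi_self) measurableSet_Ioc ?_
        intro t ht
        have hp : 0 < t ^ (a - 1) := Real.rpow_pos_of_pos (hx.trans ht.1) _
        rw [mul_comm]
        exact mul_le_mul_of_nonneg_left (Real.exp_le_exp.2 (by linarith [ht.2])) hp.le
    _ ≤ _ := by
        refine MeasureTheory.setIntegral_mono_set hI ?_ Ioc_subset_Ioi_self.eventuallyLE
        refine (MeasureTheory.ae_restrict_iff' measurableSet_Ioi).2 (Eventually.of_forall ?_)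
        intro t ht
        have hp : 0 < t ^ (a - 1) := Real.rpow_pos_of_pos (hx.trans ht) _
        simp only [Pi.zero_apply]
        positivity

lemma one_le_gHi_div {a x : ℝ} (ha : a < 0) (hx : 0 < x) : 1 ≤ gHi a x / incGamma a x :=
  (one_le_div (incGamma_pos ha hx)).2 (incGamma_le_gHi ha hx)

lemma gHi_atTop {a : ℝ} (ha : a < 0) :
    Tendsto (fun x => gHi a x / incGamma a x) atTop (nhds 1) := by
  have h1 : Tendsto (fun x : ℝ => 1 + (x - a)⁻¹) atTop (nhds 1) := by
    have : Tendsto (fun x : ℝ => (x + -a)⁻¹) atTop (nhds 0) :=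
      tendsto_inv_atTop_zero.comp (tendsto_atTop_add_const_right _ (-a) tendsto_id)
    simpa [sub_eq_add_neg] using this.const_add 1
  refine tendsto_of_tendsto_of_tendsto_of_le_of_le' tendsto_const_nhds h1 ?_ ?_
  · filter_upwards [eventually_gt_atTop 0] with x hx using one_le_gHi_div ha hx
  · filter_upwards [eventually_gt_atTop 0] with x hx
    rw [div_le_iff₀ (incGamma_pos ha hx)]
    have h2 : 0 < x - a := by linarith
    have h3 : 0 < x + (1 - a) := by linarith
    have h4 := mul_le_mul_of_nonneg_left (le_incGamma ha hx)
      (show 0 ≤ 1 + (x - a)⁻¹ by positivity)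
    refine le_trans (le_of_eq ?_) h4
    rw [gHi]
    field_simp
    ring

lemma gHi_nhdsGT {a : ℝ} (ha : a < 0) :
    Tendsto (fun x => gHi a x / incGamma a x) (nhdsWithin 0 (Ioi 0)) (nhds 1) := by
  -- The majorant is `gHi a x` over the lower bound on `(x, √x]`, after cancelling `x ^ a`.
  have h1 : Tendsto
      (fun x : ℝ => Real.exp (√x - x) * (-a / (x - a)) / (1 - x ^ (-a / 2)))
      (nhdsWithin 0 (Ioi 0)) (nhds 1) := by
    have hc : ContinuousAt
        (fun x : ℝ => Real.exp (√x - x) * (-a / (x - a)) / (1 - x ^ (-a / 2))) 0 := by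
      have hr : ContinuousAt (fun x : ℝ => x ^ (-a / 2)) 0 :=
        Real.continuousAt_rpow_const _ _ (Or.inr (by linarith))
      have hz : (0 : ℝ) ^ (-a / 2) = 0 := Real.zero_rpow (by linarith)
      refine ContinuousAt.div (ContinuousAt.mul (by fun_prop) ?_) (by fun_prop) (by simp [hz])
      exact ContinuousAt.div (by fun_prop) (by fun_prop) (by simp; exact ha.ne)
    have hz : (0 : ℝ) ^ (-a / 2) = 0 := Real.zero_rpow (by linarith)
    have := hc.tendsto
    simp only [hz, Real.sqrt_zero, sub_zero, Real.exp_zero, zero_sub, one_mul, div_one,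
      div_self (neg_ne_zero.2 ha.ne)] at this
    exact this.mono_left nhdsWithin_le_nhds
  refine tendsto_of_tendsto_of_tendsto_of_le_of_le' tendsto_const_nhds h1 ?_ ?_
  · filter_upwards [self_mem_nhdsWithin] with x hx using one_le_gHi_div ha hx
  · filter_upwards [Ioo_mem_nhdsGT (zero_lt_one' ℝ)] with x hx
    have hx0 : 0 < x := hx.1
    have hr : x ^ (-a / 2) < 1 := Real.rpow_lt_one hx0.le hx.2 (by linarith)
    have h2 : 0 < x - a := by linarith
    have h5 : 0 < 1 - x ^ (-a / 2) := by linarith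
    have hp : 0 < x ^ a := Real.rpow_pos_of_pos hx0 _
    have h6 : 0 < -a := by linarith
    rw [div_le_iff₀ (incGamma_pos ha hx0)]
    refine le_trans (le_of_eq ?_) (mul_le_mul_of_nonneg_left
      (le_incGamma_near_zero ha hx0 hx.2) (by positivity))
    have e1 : x ^ (a / 2) = x ^ a * x ^ (-a / 2) := by
      rw [← Real.rpow_add hx0]; ring_nf
    have e2 : Real.exp (√x - x) = Real.exp (-x) * (Real.exp (-√x))⁻¹ := by
      rw [← Real.exp_neg, ← Real.exp_add]; ring_nf
    rw [gHi, e1, e2, ← mul_one_sub]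
    generalize 1 - x ^ (-a / 2) = u at *
    have := Real.exp_pos (-√x)
    have := ha.ne
    field_simp

lemma gLo_div_eq {a x : ℝ} (ha : a < -1) (hx : 0 < x) :
    gLo a x / incGamma a x =
      (x - a - 1) * (x - a) / ((x - a) ^ 2 + a) * (gHi a x / incGamma a x) := by
  have h : x - a ≠ 0 := by linarith
  rw [gLo, gHi]
  field_simp

lemma rational_nhdsGT {a : ℝ} (ha : a < -1) :
    Tendsto (fun x : ℝ => (x - a - 1) * (x - a) / ((x - a) ^ 2 + a))
      (nhdsWithin 0 (Ioi 0)) (nhds 1) := by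
  have hd : (0 - a) ^ 2 + a ≠ 0 := by nlinarith
  have hc : ContinuousAt (fun x : ℝ => (x - a - 1) * (x - a) / ((x - a) ^ 2 + a)) 0 :=
    ContinuousAt.div (by fun_prop) (by fun_prop) hd
  have := hc.tendsto
  rw [show (0 - a - 1) * (0 - a) = (0 - a) ^ 2 + a by ring, div_self hd] at this
  exact this.mono_left nhdsWithin_le_nhds

lemma rational_atTop {a : ℝ} (ha : a < -1) :
    Tendsto (fun x : ℝ => (x - a - 1) * (x - a) / ((x - a) ^ 2 + a)) atTop (nhds 1) := by
  have h0 : Tendsto (fun x : ℝ => (x + -a)⁻¹) atTop (nhds 0) :=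
    tendsto_inv_atTop_zero.comp (tendsto_atTop_add_const_right _ (-a) tendsto_id)
  have h1 : Tendsto (fun x : ℝ => (1 - (x + -a)⁻¹) / (1 + a * (x + -a)⁻¹ ^ 2)) atTop
      (nhds ((1 - 0) / (1 + a * 0 ^ 2))) :=
    (h0.const_sub 1).div (((h0.pow 2).const_mul a).const_add 1) (by norm_num)
  norm_num at h1
  refine h1.congr' ?_
  filter_upwards [eventually_gt_atTop 0] with x hx
  have h2 : 0 < x - a := by linarith
  have h3 : 0 < (x - a) ^ 2 + a := by nlinarith
  rw [← sub_eq_add_neg]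
  have h4 : 1 + a * ((x - a) ^ 2)⁻¹ = ((x - a) ^ 2 + a) / (x - a) ^ 2 := by field_simp
  rw [h4]
  field_simp

theorem stmt7 :
    (∀ a : ℝ, a < -1 →
      Filter.Tendsto (fun x => gLo a x / incGamma a x) (nhdsWithin 0 (Set.Ioi 0)) (nhds 1) ∧
      Filter.Tendsto (fun x => gLo a x / incGamma a x) Filter.atTop (nhds 1)) ∧
    (∀ a : ℝ, a < 0 →
      Filter.Tendsto (fun x => gHi a x / incGamma a x) (nhdsWithin 0 (Set.Ioi 0)) (nhds 1) ∧
      Filter.Tendsto (fun x => gHi a x / incGamma a x) Filter.atTop (nhds 1)) := by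
  refine ⟨fun a ha => ⟨?_, ?_⟩, fun a ha => ⟨gHi_nhdsGT ha, gHi_atTop ha⟩⟩
  · have h := (rational_nhdsGT ha).mul (gHi_nhdsGT (show a < 0 by linarith))
    rw [one_mul] at h
    refine h.congr' ?_
    filter_upwards [self_mem_nhdsWithin] with x hx using (gLo_div_eq ha hx).symm
  · have h := (rational_atTop ha).mul (gHi_atTop (show a < 0 by linarith))
    rw [one_mul] at h
    refine h.congr' ?_
    filter_upwards [eventually_gt_atTop 0] with x hx using (gLo_div_eq ha hx).symm
end

section
/- Let a be a real number with -2 < a < 1 and a ≠ 0. Then for every real x > 0, Γ(a,x) > (1/a) · (G_{a+1}(x) − x^a e^(−x)), where G_{a+1}(x) = ((x+b_{a+1})^{a+1} − x^{a+1}) e^(−x)/((a+1) b_{a+1}) if a ≠ −1, and G_0(x) = e^(−x) ln((x+1)/x) if a = −1. -/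
/-!
Let `b = b_{a+1}`, so that `b^a = Γ(a+2)`. Then `e^x G_{a+1}(x)` is the mean of `(x+u)^a` for `u`
uniform on `(0, b)`, while `e^x Γ(a+1,x) = x^a + a e^x Γ(a,x)` is its mean for `u` standard
exponential. The claim is therefore that `(x+u)^a / a` has a strictly larger exponential mean than
uniform mean (`shifted_mean_lt`).

Both laws give the same mean to constants and, when `a > -1`, to `u^a`; the latter is what the choice
of `b` achieves (`moment_eq`). So `(x+u)^a / a` may be replaced by
`ψ(u) = (x+u)^a / a - β u^a / a - α`, with `α, β` chosen such that `ψ` has everywhere the sign of the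
difference of densities `e^(-u) - 1_{u ≤ b} / b` (`exists_testFun`); the strict inequality is then
immediate (`mean_lt_mean`).

* If `b ≤ 1`, the densities cross only at `b`, and `β = 0` works because `t^a / a` is increasing. This
  covers every `a ≤ -1`, where `Γ(a+2) ≥ 1` and hence `b ≤ 1`.
* If `b > 1`, they cross at `log b` and at `b`. Requiring `ψ` to vanish at both points fixes `α, β`,
  and `ψ` first decreases and then increases since `ψ'(u) / u^(a-1) = (1 + x/u)^(a-1) - β` is
  increasing in `u` for `a < 1`.
-/


open Real Filter Set

open MeasureTheory Topology

/-! ### The test function and its sign pattern -/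

theorem hasDerivAt_rpow_div (a : ℝ) (ha0 : a ≠ 0) (y u : ℝ) (h : 0 < y + u) :
    HasDerivAt (fun v : ℝ => (y + v) ^ a / a) ((y + u) ^ (a - 1)) u := by
  have h1 := (((hasDerivAt_id u).const_add y).rpow_const (p := a) (Or.inl h.ne')).div_const a
  refine h1.congr_deriv ?_
  simp only [id]
  field_simp

/-- The test function `V(x+u) - β V(u) - α`, where `V(t) = t^a / a`. Dividing by `a` makes `V`
increasing on `(0, ∞)` for either sign of `a`. -/
noncomputable def testFun (a x α β u : ℝ) : ℝ := (x + u) ^ a / a - β * (u ^ a / a) - α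

theorem hasDerivAt_testFun {a x : ℝ} (ha0 : a ≠ 0) (hx : 0 < x) (α β : ℝ) {u : ℝ} (hu : 0 < u) :
    HasDerivAt (testFun a x α β) ((x + u) ^ (a - 1) - β * u ^ (a - 1)) u := by
  have h1 := hasDerivAt_rpow_div a ha0 x u (by positivity)
  have h2 := hasDerivAt_rpow_div a ha0 0 u (by simpa using hu)
  simp only [zero_add] at h2
  exact (h1.sub (h2.const_mul β)).sub_const α

/-- For suitable `α, β` the test function has the sign of `e^(-u) - 1_{u ≤ b} / b`. That difference
of densities changes sign only at `b` when `b ≤ 1`, and at `log b` and `b` when `b > 1`; the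
constants are chosen so that the test function vanishes at exactly these points. Moreover `β ≠ 0` only when
`u^a` is integrable near `0`. -/
theorem exists_testFun {a x b : ℝ} (ha2 : a < 1) (ha0 : a ≠ 0) (hx : 0 < x) (hb : 0 < b)
    (hab : b ≤ 1 ∨ -1 < a) :
    ∃ α β : ℝ, (β = 0 ∨ -1 < a) ∧
      (∀ u ∈ Ioc 0 b, 0 ≤ (Real.exp (-u) - 1 / b) * testFun a x α β u) ∧
      ∀ u, b < u → 0 < testFun a x α β u := by
  by_cases hb1 : b ≤ 1
  · -- With `β = 0` the test function is increasing, so a single zero at `b` suffices.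
    refine ⟨(x + b) ^ a / a, 0, Or.inl rfl, ?_⟩
    have hmono : StrictMonoOn (testFun a x ((x + b) ^ a / a) 0) (Ioi 0) := by
      refine strictMonoOn_of_deriv_pos (convex_Ioi 0)
        (fun u hu => (hasDerivAt_testFun ha0 hx _ _ hu).continuousAt.continuousWithinAt) ?_
      intro u hu
      rw [interior_Ioi] at hu
      have hu' : 0 < u := hu
      rw [(hasDerivAt_testFun ha0 hx _ _ hu).deriv, zero_mul, sub_zero]
      positivity
    have hzero : testFun a x ((x + b) ^ a / a) 0 b = 0 := by simp [testFun]
    constructor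
    · intro u hu
      refine mul_nonneg_of_nonpos_of_nonpos ?_ ?_
      · have h1 : Real.exp (-u) ≤ 1 := Real.exp_le_one_iff.mpr (by linarith [hu.1])
        have h2 : 1 ≤ 1 / b := by rw [le_div_iff₀ hb]; linarith
        linarith
      · exact (hmono.monotoneOn hu.1 hb hu.2).trans_eq hzero
    · intro u hu
      exact hzero.symm.trans_lt (hmono hb (hb.trans hu) hu)
  · push Not at hb1
    have ha : -1 < a := hab.resolve_left (not_le.mpr hb1)
    have hp : 0 < Real.log b := Real.log_pos hb1
    have hpb : Real.log b < b := (Real.log_le_sub_one_of_pos hb).trans_lt (by linarith)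
    have hV : StrictMonoOn (fun v : ℝ => v ^ a / a) (Ioi 0) := by
      have hd : ∀ v : ℝ, 0 < v → HasDerivAt (fun v : ℝ => v ^ a / a) (v ^ (a - 1)) v := by
        intro v hv
        simpa using hasDerivAt_rpow_div a ha0 0 v (by simpa using hv)
      refine strictMonoOn_of_deriv_pos (convex_Ioi 0)
        (fun u hu => (hd u hu).continuousAt.continuousWithinAt) ?_
      intro u hu
      rw [interior_Ioi] at hu
      have hu' : 0 < u := hu
      rw [(hd u hu).deriv]
      positivity
    set p := Real.log b with hpdef
    have hVpb : p ^ a / a < b ^ a / a := hV hp hb hpb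
    -- `α` and `β` solve the two linear equations `testFun p = testFun b = 0`.
    set β := ((x + b) ^ a / a - (x + p) ^ a / a) / (b ^ a / a - p ^ a / a) with hβ
    have hβ' : β * (b ^ a / a - p ^ a / a) = (x + b) ^ a / a - (x + p) ^ a / a :=
      div_mul_cancel₀ _ (by linarith)
    set α := (x + p) ^ a / a - β * (p ^ a / a) with hα
    have hzp : testFun a x α β p = 0 := by simp only [testFun]; linarith
    have hzb : testFun a x α β b = 0 := by simp only [testFun]; linarith
    -- The critical point `m` given by Rolle's theorem determines `β`; since
    -- `((x + u) / u) ^ (a - 1)` increases with `u`, it is the only one.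
    obtain ⟨m, ⟨hpm, hmb⟩, hm⟩ := exists_hasDerivAt_eq_zero (f := testFun a x α β) hpb
      (fun u hu => (hasDerivAt_testFun ha0 hx _ _
        (hp.trans_le hu.1)).continuousAt.continuousWithinAt) (hzp.trans hzb.symm)
      (fun u hu => hasDerivAt_testFun ha0 hx _ _ (hp.trans hu.1))
    have hm0 : 0 < m := hp.trans hpm
    have hβm : β = ((x + m) / m) ^ (a - 1) := by
      rw [Real.div_rpow (by positivity) hm0.le, eq_div_iff (by positivity)]
      linarith
    have hfac : ∀ u : ℝ, 0 < u → (x + u) ^ (a - 1) - β * u ^ (a - 1) =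
        (((x + u) / u) ^ (a - 1) - ((x + m) / m) ^ (a - 1)) * u ^ (a - 1) := by
      intro u hu
      have : ((x + u) / u) ^ (a - 1) * u ^ (a - 1) = (x + u) ^ (a - 1) := by
        rw [← Real.mul_rpow (by positivity) hu.le, div_mul_cancel₀ _ hu.ne']
      rw [sub_mul, this, hβm]
    have hquot : ∀ u v : ℝ, 0 < u → u < v →
        ((x + u) / u) ^ (a - 1) < ((x + v) / v) ^ (a - 1) := by
      intro u v hu huv
      have hv : 0 < v := hu.trans huv
      refine Real.rpow_lt_rpow_of_neg (by positivity) ?_ (by linarith)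
      rw [div_lt_div_iff₀ hv hu]
      nlinarith
    have hanti : StrictAntiOn (testFun a x α β) (Ioc 0 m) := by
      refine strictAntiOn_of_deriv_neg (convex_Ioc 0 m)
        (fun u hu => (hasDerivAt_testFun ha0 hx _ _ hu.1).continuousAt.continuousWithinAt) ?_
      intro u hu
      rw [interior_Ioc] at hu
      have hu0 : 0 < u := hu.1
      rw [(hasDerivAt_testFun ha0 hx _ _ hu.1).deriv, hfac u hu.1]
      exact mul_neg_of_neg_of_pos (sub_neg.mpr (hquot u m hu.1 hu.2)) (by positivity)
    have hmono : StrictMonoOn (testFun a x α β) (Ici m) := by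
      refine strictMonoOn_of_deriv_pos (convex_Ici m)
        (fun u hu => (hasDerivAt_testFun ha0 hx _ _
          (hm0.trans_le hu)).continuousAt.continuousWithinAt) ?_
      intro u hu
      rw [interior_Ici] at hu
      have hu0 : 0 < u := hm0.trans hu
      rw [(hasDerivAt_testFun ha0 hx _ _ hu0).deriv, hfac u hu0]
      exact mul_pos (sub_pos.mpr (hquot m u hm0 hu)) (by positivity)
    have hexp : Real.exp (-p) = 1 / b := by
      rw [Real.exp_neg, hpdef, Real.exp_log hb, one_div]
    refine ⟨α, β, Or.inr ha, ?_, ?_⟩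
    · rintro u ⟨hu0, hub⟩
      rw [← hexp]
      rcases le_total u p with hup | hup
      · refine mul_nonneg (sub_nonneg.mpr (Real.exp_le_exp.mpr (by linarith))) ?_
        rw [← hzp]
        exact hanti.antitoneOn ⟨hu0, hup.trans hpm.le⟩ ⟨hp, hpm.le⟩ hup
      · refine mul_nonneg_of_nonpos_of_nonpos
          (sub_nonpos.mpr (Real.exp_le_exp.mpr (by linarith))) ?_
        rcases le_total u m with hum | hum
        · rw [← hzp]
          exact hanti.antitoneOn ⟨hp, hpm.le⟩ ⟨hu0, hum⟩ hup
        · rw [← hzb]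
          exact hmono.monotoneOn hum hmb.le hub
    · intro u hu
      rw [← hzb]
      exact hmono hmb.le (hmb.le.trans hu.le) hu

/-! ### The shifted incomplete gamma integral -/

theorem integrableOn_shift (s : ℝ) {x : ℝ} (hx : 0 < x) :
    IntegrableOn (fun u : ℝ => Real.exp (-u) * (x + u) ^ s) (Ioi 0) := by
  have h1 : IntegrableOn (fun t : ℝ => Real.exp (-t) * t ^ s) (Ioi x) :=
    integrable_of_isBigO_exp_neg one_half_pos
      (continuousOn_id.neg.rexp.mul (continuousOn_id.rpow_const
        (fun t ht => Or.inl (hx.trans_le ht).ne')))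
      (Real.Gamma_integrand_isLittleO s).isBigO
  have h2 := ((measurePreserving_add_left volume x).integrableOn_comp_preimage
    (measurableEmbedding_addLeft x)).mpr h1
  have h3 : (fun u => x + u) ⁻¹' Ioi x = Ioi 0 := by ext; simp
  rw [h3] at h2
  refine (h2.const_mul (Real.exp x)).congr (ae_of_all _ fun u => ?_)
  simp only [Function.comp]
  rw [← mul_assoc, ← Real.exp_add]
  congr 2
  ring

theorem incGamma_shift (s x : ℝ) :
    ∫ u in Ioi (0 : ℝ), Real.exp (-u) * (x + u) ^ (s - 1) = Real.exp x * incGamma s x := by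
  have h2 := (measurePreserving_add_left volume x).setIntegral_preimage_emb
    (measurableEmbedding_addLeft x) (fun t : ℝ => t ^ (s - 1) * Real.exp (-t)) (Ioi x)
  have h3 : (fun u => x + u) ⁻¹' Ioi x = Ioi 0 := by ext; simp
  rw [h3] at h2
  rw [incGamma, ← h2, ← integral_const_mul]
  refine integral_congr_ae (ae_of_all _ fun u => ?_)
  simp only
  rw [mul_left_comm, ← Real.exp_add, mul_comm]
  congr 2
  ring

/-- Integration by parts: `Γ(a+1,x) = a Γ(a,x) + x^a e^(-x)` in shifted form. -/
theorem integral_shift_eq (a : ℝ) {x : ℝ} (hx : 0 < x) :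
    ∫ u in Ioi (0 : ℝ), Real.exp (-u) * (x + u) ^ a =
      x ^ a + a * (Real.exp x * incGamma a x) := by
  have hd : ∀ u ∈ Ici (0 : ℝ), HasDerivAt (fun u : ℝ => Real.exp (-u) * (x + u) ^ a)
      (a * (Real.exp (-u) * (x + u) ^ (a - 1)) - Real.exp (-u) * (x + u) ^ a) u := by
    intro u hu
    have hu' : 0 < x + u := add_pos_of_pos_of_nonneg hx hu
    have h1 := ((hasDerivAt_id u).const_add x).rpow_const (p := a) (Or.inl hu'.ne')
    have h2 := (hasDerivAt_neg u).exp
    refine (h2.mul h1).congr_deriv ?_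
    simp only [id]
    ring
  have hint1 := (integrableOn_shift (a - 1) hx).const_mul a
  have hint2 := integrableOn_shift a hx
  have hlim : Tendsto (fun u : ℝ => Real.exp (-u) * (x + u) ^ a) atTop (𝓝 0) := by
    have h1 := (tendsto_rpow_mul_exp_neg_mul_atTop_nhds_zero a 1 one_pos).comp
      (tendsto_atTop_add_const_left atTop x tendsto_id)
    have h2 := h1.const_mul (Real.exp x)
    rw [mul_zero] at h2
    refine h2.congr fun u => ?_
    simp only [Function.comp, id]
    rw [mul_left_comm, ← Real.exp_add, mul_comm]
    congr 2
    ring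
  have h := integral_Ioi_of_hasDerivAt_of_tendsto' hd (hint1.sub hint2) hlim
  rw [integral_sub hint1 hint2, integral_const_mul, incGamma_shift] at h
  simp only [neg_zero, Real.exp_zero, add_zero, one_mul] at h
  linarith

/-! ### Comparison of the exponential and uniform means -/

/-- A function whose sign agrees with that of `e^(-u) - 1_{u ≤ b} / b` has a larger mean under the
standard exponential law than under the uniform law on `(0, b)`. -/
theorem mean_lt_mean {ψ : ℝ → ℝ} {b : ℝ} (hb : 0 < b)
    (h1 : IntegrableOn (fun u => Real.exp (-u) * ψ u) (Ioi 0))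
    (h2 : IntegrableOn ψ (Ioc 0 b))
    (hle : ∀ u ∈ Ioc 0 b, 0 ≤ (Real.exp (-u) - 1 / b) * ψ u) (hgt : ∀ u, b < u → 0 < ψ u) :
    1 / b * ∫ u in Ioc 0 b, ψ u < ∫ u in Ioi 0, Real.exp (-u) * ψ u := by
  have hsub : Ioc 0 b ⊆ Ioi (0 : ℝ) := fun u hu => hu.1
  have hsub' : Ioi b ⊆ Ioi (0 : ℝ) := Ioi_subset_Ioi hb.le
  have hdisj : Disjoint (Ioc 0 b) (Ioi b) := Ioc_disjoint_Ioi le_rfl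
  rw [← Ioc_union_Ioi_eq_Ioi hb.le, setIntegral_union hdisj measurableSet_Ioi (h1.mono_set hsub)
    (h1.mono_set hsub')]
  have hA : 1 / b * ∫ u in Ioc 0 b, ψ u ≤ ∫ u in Ioc 0 b, Real.exp (-u) * ψ u := by
    rw [← integral_const_mul]
    refine setIntegral_mono_on (h2.const_mul _) (h1.mono_set hsub) measurableSet_Ioc fun u hu => ?_
    have := hle u hu
    rw [sub_mul] at this
    linarith
  have hB : 0 < ∫ u in Ioi b, Real.exp (-u) * ψ u := by
    have hpos : ∀ u ∈ Ioi b, 0 < Real.exp (-u) * ψ u :=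
      fun u hu => mul_pos (Real.exp_pos _) (hgt u hu)
    rw [setIntegral_pos_iff_support_of_nonneg_ae
      ((ae_restrict_iff' measurableSet_Ioi).mpr (ae_of_all _ fun u hu => (hpos u hu).le))
      (h1.mono_set hsub')]
    have : Function.support (fun u => Real.exp (-u) * ψ u) ∩ Ioi b = Ioi b :=
      inter_eq_right.mpr fun u hu => (hpos u hu).ne'
    rw [this]
    simp
  linarith

/-- The normalisation `b^a = Γ(a+2)` makes the moments of order `a` of the standard exponential law
and of the uniform law on `(0, b)` agree. -/
theorem moment_eq {a b : ℝ} (ha : -1 < a) (hb : 0 < b) (hba : b ^ a = Real.Gamma (a + 2)) :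
    1 / b * ∫ u in Ioc 0 b, u ^ a = ∫ u in Ioi (0 : ℝ), Real.exp (-u) * u ^ a := by
  have ha1 : a + 1 ≠ 0 := by linarith
  have hG := Real.Gamma_eq_integral (s := a + 1) (by linarith)
  rw [add_sub_cancel_right] at hG
  rw [← hG, ← intervalIntegral.integral_of_le hb.le, integral_rpow (Or.inl ha),
    Real.zero_rpow ha1, Real.rpow_add_one hb.ne', hba, show a + 2 = a + 1 + 1 by ring,
    Real.Gamma_add_one ha1]
  field_simp
  ring

theorem integrableOn_Ioc_shift (a : ℝ) {x b : ℝ} (hx : 0 < x) :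
    IntegrableOn (fun u : ℝ => (x + u) ^ a) (Ioc 0 b) := by
  refine (ContinuousOn.integrableOn_Icc ?_).mono_set Ioc_subset_Icc_self
  exact (continuousOn_const.add continuousOn_id).rpow_const
    fun u hu => Or.inl (add_pos_of_pos_of_nonneg hx hu.1).ne'

/-- The bound in terms of the mean of `(x+u)^a` over `(0, b)`. In the comparison of the two means of
the test function, the contributions of `α` and of `β V(u)` cancel. -/
theorem shifted_mean_lt {a x b : ℝ} (ha2 : a < 1) (ha0 : a ≠ 0) (hx : 0 < x) (hb : 0 < b)
    (hab : b ≤ 1 ∨ -1 < a) (hba : b ^ a = Real.Gamma (a + 2)) :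
    1 / a * (1 / b * (∫ u in Ioc 0 b, (x + u) ^ a) - x ^ a) < Real.exp x * incGamma a x := by
  obtain ⟨α, β, hβ, hle, hgt⟩ := exists_testFun ha2 ha0 hx hb hab
  obtain ⟨hK1, hK2, hK3⟩ : IntegrableOn (fun u : ℝ => β * (u ^ a / a)) (Ioc 0 b) ∧
      IntegrableOn (fun u : ℝ => Real.exp (-u) * (β * (u ^ a / a))) (Ioi 0) ∧
      1 / b * ∫ u in Ioc 0 b, β * (u ^ a / a) =
        ∫ u in Ioi (0 : ℝ), Real.exp (-u) * (β * (u ^ a / a)) := by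
    rcases hβ with rfl | ha
    · simp
    · have e : ∀ u : ℝ, Real.exp (-u) * (β * (u ^ a / a)) =
          β / a * (Real.exp (-u) * u ^ a) := fun u => by ring
      have e' : ∀ u : ℝ, β * (u ^ a / a) = β / a * u ^ a := fun u => by ring
      simp only [e]
      simp only [e']
      refine ⟨Integrable.const_mul ?_ _, Integrable.const_mul ?_ _, ?_⟩
      · have := intervalIntegral.intervalIntegrable_rpow' (a := 0) (b := b) ha
        exact (intervalIntegrable_iff_integrableOn_Ioc_of_le hb.le).mp this
      · simpa [IntegrableOn] using Real.GammaIntegral_convergent (s := a + 1) (by linarith)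
      · rw [integral_const_mul, integral_const_mul, ← moment_eq ha hb hba]
        ring
  have hS1 : IntegrableOn (fun u : ℝ => (x + u) ^ a / a) (Ioc 0 b) :=
    (integrableOn_Ioc_shift a hx).div_const a
  have hS2 : IntegrableOn (fun u : ℝ => Real.exp (-u) * ((x + u) ^ a / a)) (Ioi 0) := by
    simpa only [IntegrableOn, mul_div_assoc] using (integrableOn_shift a hx).div_const a
  have hC1 : IntegrableOn (fun _ : ℝ => α) (Ioc 0 b) := integrableOn_const (by simp)
  have hC2 : IntegrableOn (fun u : ℝ => Real.exp (-u) * α) (Ioi 0) :=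
    (integrableOn_exp_neg_Ioi 0).mul_const α
  have hexp : (fun u => Real.exp (-u) * testFun a x α β u) = fun u : ℝ =>
      Real.exp (-u) * ((x + u) ^ a / a) - Real.exp (-u) * (β * (u ^ a / a)) -
        Real.exp (-u) * α := by
    funext u
    simp only [testFun]
    ring
  have key := mean_lt_mean (ψ := testFun a x α β) hb (by rw [hexp]; exact (hS2.sub hK2).sub hC2)
    ((hS1.sub hK1).sub hC1) hle hgt
  have hD1 : IntegrableOn (fun u : ℝ => (x + u) ^ a / a - β * (u ^ a / a)) (Ioc 0 b) := hS1.sub hK1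
  have hD2 : IntegrableOn (fun u : ℝ => Real.exp (-u) * ((x + u) ^ a / a) -
      Real.exp (-u) * (β * (u ^ a / a))) (Ioi 0) := hS2.sub hK2
  rw [hexp, integral_sub hD2 hC2, integral_sub hS2 hK2] at key
  simp only [testFun] at key
  rw [integral_sub hD1 hC1, integral_sub hS1 hK1, mul_sub, mul_sub, hK3,
    integral_mul_const, integral_exp_neg_Ioi_zero, setIntegral_const, integral_div] at key
  have h4 : ∫ u in Ioi (0 : ℝ), Real.exp (-u) * ((x + u) ^ a / a) =
      (x ^ a + a * (Real.exp x * incGamma a x)) / a := by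
    rw [← integral_shift_eq a hx, ← integral_div]
    simp only [mul_div_assoc]
  have h5 : 1 / b * (volume.real (Ioc 0 b) • α) = α := by
    rw [Real.volume_real_Ioc_of_le hb.le, smul_eq_mul, sub_zero]
    field_simp
  rw [h4, h5, add_div, mul_div_cancel_left₀ _ ha0] at key
  have h6 : 1 / a * (1 / b * (∫ u in Ioc 0 b, (x + u) ^ a) - x ^ a) =
    1 / b * ((∫ u in Ioc 0 b, (x + u) ^ a) / a) - x ^ a / a := by ring
  rw [h6]
  linarith

/-! ### Evaluation of the uniform mean -/

/-- By convexity, since `Γ(1) = Γ(2) = 1`. -/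
theorem one_le_Gamma {s : ℝ} (hs : 0 < s) (hs1 : s ≤ 1) : 1 ≤ Real.Gamma s := by
  rcases hs1.eq_or_lt with rfl | h
  · simp
  · have hc := Real.convexOn_Gamma.slope_mono_adjacent (x := s) (y := 1) (z := 2) hs
      (by norm_num) h one_lt_two
    rw [Real.Gamma_one, Real.Gamma_two, sub_self, zero_div, div_le_iff₀ (by linarith)] at hc
    linarith

theorem integral_shift_rpow {a x b : ℝ} (hx : 0 < x) (hb : 0 < b) (ha : a ≠ -1) :
    ∫ u in Ioc 0 b, (x + u) ^ a = ((x + b) ^ (a + 1) - x ^ (a + 1)) / (a + 1) := by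
  rw [← intervalIntegral.integral_of_le hb.le,
    intervalIntegral.integral_comp_add_left (fun t : ℝ => t ^ a), add_zero, integral_rpow]
  exact Or.inr ⟨ha, notMem_uIcc_of_lt hx (by positivity)⟩

theorem integral_shift_inv {x : ℝ} (hx : 0 < x) :
    ∫ u in Ioc (0 : ℝ) 1, (x + u) ^ (-1 : ℝ) = Real.log ((x + 1) / x) := by
  rw [← intervalIntegral.integral_of_le zero_le_one,
    intervalIntegral.integral_comp_add_left (fun t : ℝ => t ^ (-1 : ℝ)), add_zero]
  simp only [Real.rpow_neg_one]
  exact integral_inv_of_pos hx (by positivity)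

theorem stmt14 (a : ℝ) (ha1 : -2 < a) (ha2 : a < 1) (ha0 : a ≠ 0) :
    ∀ x : ℝ, 0 < x →
      (1 / a) * ((if a = -1 then Real.exp (-x) * Real.log ((x + 1) / x)
          else Gbound (a + 1) x) - x ^ a * Real.exp (-x)) < incGamma a x := by
  intro x hx
  have hGpos : 0 < Real.Gamma (a + 2) := Real.Gamma_pos_of_pos (by linarith)
  set b := bCoef (a + 1) with hbdef
  have hbeq : b = Real.Gamma (a + 2) ^ (1 / a) := by
    rw [hbdef, bCoef, if_neg (by simpa using ha0)]
    congr 2 <;> ring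
  have hb : 0 < b := by rw [hbeq]; positivity
  have hba : b ^ a = Real.Gamma (a + 2) := by
    rw [hbeq, ← Real.rpow_mul hGpos.le, one_div_mul_cancel ha0, Real.rpow_one]
  have hab : b ≤ 1 ∨ -1 < a := by
    rcases lt_or_ge (-1) a with h | h
    · exact Or.inr h
    · left
      rw [hbeq]
      exact Real.rpow_le_one_of_one_le_of_nonpos (one_le_Gamma (by linarith) (by linarith))
        (one_div_nonpos.mpr (by linarith))
  have key := shifted_mean_lt ha2 ha0 hx hb hab hba
  have hif : (if a = -1 then Real.exp (-x) * Real.log ((x + 1) / x) else Gbound (a + 1) x) =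
      Real.exp (-x) * (1 / b * ∫ u in Ioc 0 b, (x + u) ^ a) := by
    split_ifs with h
    · have hb1 : b = 1 := by rw [hbeq, h]; norm_num
      rw [hb1, h, integral_shift_inv hx]
      simp
    · rw [integral_shift_rpow hx hb h, Gbound, ← hbdef]
      have : a + 1 ≠ 0 := fun h' => h (by linarith)
      field_simp
  rw [hif]
  have h1 := mul_lt_mul_of_pos_left key (Real.exp_pos (-x))
  rw [← mul_assoc (Real.exp (-x)) (Real.exp x), ← Real.exp_add, neg_add_cancel, Real.exp_zero,
    one_mul] at h1
  refine lt_of_eq_of_lt ?_ h1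
  ring
end
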